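/- Let K be a finite 2-dimensional geometric simplicial complex in ℝⁿ and let v be a vertex of K such that every edge of K containing v is contained in at most two triangles of K. If the link graph L(v) is disconnected (it has at least two nonempty connected components), then v is not a locally planar point of |K|. -/

import Mathlib

open Geometry

namespace PaperAlg

/-- Points of `ℝⁿ`. -/
abbrev Pt (n : ℕ) := EuclideanSpace ℝ (Fin n)

variable {n : ℕ}

/-- The 1-skeleton graph of a geometric simplicial complex `K`: its vertex set is the set of
vertices of `K`, and two vertices are adjacent iff they form an edge (a two-element face) of `K`. -/
def skeletonGraph (K : SimplicialComplex ℝ (Pt n)) : SimpleGraph K.vertices where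
  Adj u v := (u : Pt n) ≠ (v : Pt n) ∧
    ∃ s ∈ K.faces, (s : Set (Pt n)) = {(u : Pt n), (v : Pt n)}
  symm := by
    refine ⟨?_⟩
    rintro u v ⟨hne, s, hs, hset⟩
    exact ⟨fun h => hne h.symm, s, hs, by rw [hset, Set.pair_comm]⟩
  loopless := by refine ⟨?_⟩; rintro u ⟨hne, -⟩; exact hne rfl

/-- `K` is 2-dimensional: every face has at most three elements. -/
def TwoDimensional (K : SimplicialComplex ℝ (Pt n)) : Prop :=
  ∀ s ∈ K.faces, s.card ≤ 3

/-- The set of triangles (three-element faces) of `K` containing the finset `e`. -/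
def trianglesContaining (K : SimplicialComplex ℝ (Pt n)) (e : Finset (Pt n)) :
    Set (Finset (Pt n)) :=
  {t | t ∈ K.faces ∧ t.card = 3 ∧ e ⊆ t}

/-- An edge of `K` contained in exactly one triangle. -/
def IsBoundaryEdge (K : SimplicialComplex ℝ (Pt n)) (e : Finset (Pt n)) : Prop :=
  e ∈ K.faces ∧ e.card = 2 ∧ (trianglesContaining K e).ncard = 1

/-- An edge of `K` contained in exactly two triangles. -/
def IsInteriorEdge (K : SimplicialComplex ℝ (Pt n)) (e : Finset (Pt n)) : Prop :=
  e ∈ K.faces ∧ e.card = 2 ∧ (trianglesContaining K e).ncard = 2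

/-- The closed upper half-plane `{(a, b) ∈ ℝ² : b ≥ 0}`. -/
def HalfPlane : Set (ℝ × ℝ) := {p | 0 ≤ p.2}

/-- `x` has a neighborhood in `|K|` homeomorphic to an open subset of `ℝ²`. -/
def HasPlanarNbhd (K : SimplicialComplex ℝ (Pt n)) (x : Pt n) : Prop :=
  ∃ U : Set (Pt n), U ⊆ K.space ∧ U ∈ nhdsWithin x K.space ∧
    ∃ V : Set (ℝ × ℝ), IsOpen V ∧ Nonempty (↥U ≃ₜ ↥V)

/-- `x` has a neighborhood in `|K|` homeomorphic to an open subset of the closed half-plane. -/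
def HasHalfPlanarNbhd (K : SimplicialComplex ℝ (Pt n)) (x : Pt n) : Prop :=
  ∃ U : Set (Pt n), U ⊆ K.space ∧ U ∈ nhdsWithin x K.space ∧
    ∃ V : Set ↥HalfPlane, IsOpen V ∧ Nonempty (↥U ≃ₜ ↥V)

/-- `x` is a locally planar point of `|K|`. -/
def IsLocallyPlanarPt (K : SimplicialComplex ℝ (Pt n)) (x : Pt n) : Prop :=
  x ∈ K.space ∧ (HasPlanarNbhd K x ∨ HasHalfPlanarNbhd K x)

/-- `K` is locally planar if every point of `|K|` is locally planar. -/
def LocallyPlanar (K : SimplicialComplex ℝ (Pt n)) : Prop :=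
  ∀ x ∈ K.space, IsLocallyPlanarPt K x

/-- The vertices `a` of `K` such that `{v, a}` is an edge of `K`. -/
def linkVertices (K : SimplicialComplex ℝ (Pt n)) (v : Pt n) : Set (Pt n) :=
  {a | a ≠ v ∧ ∃ s ∈ K.faces, (s : Set (Pt n)) = {v, a}}

/-- The link graph `L(v)`: vertices are the `a` with `{v, a}` an edge of `K`, and `a`, `b`
are adjacent iff `{v, a, b}` is a triangle of `K`. -/
def linkGraph (K : SimplicialComplex ℝ (Pt n)) (v : Pt n) :
    SimpleGraph (linkVertices K v) where
  Adj a b := (a : Pt n) ≠ (b : Pt n) ∧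
    ∃ t ∈ K.faces, t.card = 3 ∧ (t : Set (Pt n)) = {v, (a : Pt n), (b : Pt n)}
  symm := by
    refine ⟨?_⟩
    rintro a b ⟨hne, t, ht, hc, hset⟩
    exact ⟨fun h => hne h.symm, t, ht, hc, by rw [hset, Set.pair_comm]⟩
  loopless := by refine ⟨?_⟩; rintro a ⟨hne, -⟩; exact hne rfl

/-- The vertices of `K` lying on some boundary edge. -/
def boundaryVertices (K : SimplicialComplex ℝ (Pt n)) : Set (Pt n) :=
  {v | ∃ e, IsBoundaryEdge K e ∧ v ∈ e}

/-- The boundary graph of `K`: the simple graph formed by the boundary edges of `K`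
and their endpoints. -/
def boundaryGraph (K : SimplicialComplex ℝ (Pt n)) :
    SimpleGraph (boundaryVertices K) where
  Adj u v := (u : Pt n) ≠ (v : Pt n) ∧
    ∃ e, IsBoundaryEdge K e ∧ (e : Set (Pt n)) = {(u : Pt n), (v : Pt n)}
  symm := by
    refine ⟨?_⟩
    rintro u v ⟨hne, e, he, hset⟩
    exact ⟨fun h => hne h.symm, e, he, by rw [hset, Set.pair_comm]⟩
  loopless := by refine ⟨?_⟩; rintro u ⟨hne, -⟩; exact hne rfl

/-- The Euler characteristic `χ(K) = V - E + F`. -/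
noncomputable def eulerChar (K : SimplicialComplex ℝ (Pt n)) : ℤ :=
  (K.vertices.ncard : ℤ)
    - ({e : Finset (Pt n) | e ∈ K.faces ∧ e.card = 2}.ncard : ℤ)
    + ({t : Finset (Pt n) | t ∈ K.faces ∧ t.card = 3}.ncard : ℤ)

/-- The three directed edges induced on its boundary by the cyclic ordering `(a, b, c)`. -/
def triDirs (o : Pt n × Pt n × Pt n) : Set (Pt n × Pt n) :=
  {(o.1, o.2.1), (o.2.1, o.2.2), (o.2.2, o.1)}

/-- `K` is orientable: one can assign to each triangle a cyclic ordering of its vertices so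
that the two triangles containing any interior edge induce opposite directions on it. -/
def Orientable (K : SimplicialComplex ℝ (Pt n)) : Prop :=
  ∃ ori : Finset (Pt n) → Pt n × Pt n × Pt n,
    (∀ t ∈ K.faces, t.card = 3 →
      (t : Set (Pt n)) = {(ori t).1, (ori t).2.1, (ori t).2.2}) ∧
    (∀ t₁ ∈ K.faces, ∀ t₂ ∈ K.faces, t₁.card = 3 → t₂.card = 3 → t₁ ≠ t₂ →
      ∀ e ∈ K.faces, e.card = 2 → e ⊆ t₁ → e ⊆ t₂ →
      ∀ x y : Pt n, x ∈ e → y ∈ e → x ≠ y →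
        (x, y) ∈ triDirs (ori t₁) → (y, x) ∈ triDirs (ori t₂))

/-- The genus of a topological space `X`: the supremum of the numbers `m` for which there exist
`m` pairwise disjoint subsets of `X`, each homeomorphic to the circle `S¹`, whose union has
connected complement. -/
noncomputable def genus (X : Type*) [TopologicalSpace X] : ℕ :=
  sSup {m : ℕ | ∃ C : Fin m → Set X,
    (Pairwise fun i j => Disjoint (C i) (C j)) ∧
    (∀ i, Nonempty (↥(C i) ≃ₜ ↥(Metric.sphere (0 : EuclideanSpace ℝ (Fin 2)) 1))) ∧
    IsConnected (⋃ i, C i)ᶜ}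

/-- Punctured neighborhoods can be made arbitrarily small and preconnected. -/
def PuncConn (Y : Type*) [TopologicalSpace Y] : Prop :=
  ∀ y : Y, ∀ N ∈ nhds y, ∃ W ∈ nhds y, W ⊆ N ∧ IsPreconnected (W \ {y})

lemma puncConn_subtype {Z : Type*} [TopologicalSpace Z] (hZ : PuncConn Z) (V : Set Z)
    (hV : IsOpen V) : PuncConn ↥V := by
  intro y N hN
  have h1 : Subtype.val '' N ∈ nhds (y : Z) := hV.isOpenMap_subtype_val.image_mem_nhds hN
  obtain ⟨W, hW, hWN, hc⟩ := hZ y _ h1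
  refine ⟨Subtype.val ⁻¹' W, continuous_subtype_val.continuousAt.preimage_mem_nhds hW, ?_, ?_⟩
  · intro x hx
    obtain ⟨x', hx', he⟩ := hWN hx
    rwa [← Subtype.ext he]
  · rw [← Topology.IsInducing.subtypeVal.isPreconnected_image]
    convert hc using 1
    ext z
    constructor
    · rintro ⟨x, ⟨hx, hxy⟩, rfl⟩
      exact ⟨hx, fun h => hxy (Subtype.ext h)⟩
    · rintro ⟨hz, hzy⟩
      obtain ⟨x', hx', rfl⟩ := hWN hz
      exact ⟨x', ⟨hz, fun h => hzy (congrArg Subtype.val h)⟩, rfl⟩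

lemma not_mem_segment_of_det {p x q : ℝ × ℝ}
    (hd : (x.1 - p.1) * (q.2 - p.2) - (x.2 - p.2) * (q.1 - p.1) ≠ 0) : p ∉ segment ℝ x q := by
  rintro ⟨α, β, hα, hβ, hs, rfl⟩
  apply hd
  have : β = 1 - α := by linarith
  subst this
  simp
  ring

lemma preconn_aux {W : Set (ℝ × ℝ)} (hW : Convex ℝ W) {p : ℝ × ℝ} {δ : ℝ} (hδ : 0 < δ)
    (h1 : (p.1 + δ, p.2) ∈ W) (h2 : (p.1, p.2 + δ) ∈ W) : IsPreconnected (W \ {p}) := by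
  apply isPreconnected_of_forall_pair
  rintro x ⟨hx, hxp⟩ y ⟨hy, hyp⟩
  by_cases hp : p ∈ segment ℝ x y
  · have hq : ∃ q ∈ W, (x.1 - p.1) * (q.2 - p.2) - (x.2 - p.2) * (q.1 - p.1) ≠ 0 := by
      by_cases hx1 : x.1 - p.1 = 0
      · refine ⟨_, h1, ?_⟩
        have : x.2 - p.2 ≠ 0 := fun h => hxp (Prod.ext (by linarith) (by linarith))
        simp [this, hδ.ne']
      · refine ⟨_, h2, ?_⟩
        simp [hx1, hδ.ne']
    obtain ⟨q, hqW, hq⟩ := hq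
    have hxq := not_mem_segment_of_det hq
    have hyq : p ∉ segment ℝ y q := by
      apply not_mem_segment_of_det
      obtain ⟨α, β, hα, hβ, hs, he⟩ := hp
      have hα0 : α ≠ 0 := by
        rintro rfl
        apply hyp
        have : β = 1 := by linarith
        subst this
        simpa using he
      have e1 : α * x.1 + β * y.1 = p.1 := by rw [← he]; simp
      have e2 : α * x.2 + β * y.2 = p.2 := by rw [← he]; simp
      intro h
      have : α * ((x.1 - p.1) * (q.2 - p.2) - (x.2 - p.2) * (q.1 - p.1)) = 0 := by
        have hα' : α = 1 - β := by linarith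
        have f1 : α * (x.1 - p.1) = - β * (y.1 - p.1) := by linear_combination e1 - p.1 * hs
        have f2 : α * (x.2 - p.2) = - β * (y.2 - p.2) := by linear_combination e2 - p.2 * hs
        linear_combination (q.2 - p.2) * f1 - (q.1 - p.1) * f2 - β * h
      rcases mul_eq_zero.1 this with h | h
      · exact hα0 h
      · exact hq h
    refine ⟨segment ℝ x q ∪ segment ℝ y q, ?_, Or.inl (left_mem_segment _ _ _),
      Or.inr (left_mem_segment _ _ _), ?_⟩
    · rintro z (hz | hz)
      · exact ⟨hW.segment_subset hx hqW hz, fun h => hxq (by rwa [← Set.mem_singleton_iff.1 h])⟩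
      · exact ⟨hW.segment_subset hy hqW hz, fun h => hyq (by rwa [← Set.mem_singleton_iff.1 h])⟩
    · exact IsPreconnected.union q (right_mem_segment _ _ _) (right_mem_segment _ _ _)
        (convex_segment _ _).isPreconnected (convex_segment _ _).isPreconnected
  · exact ⟨segment ℝ x y,
      fun z hz => ⟨hW.segment_subset hx hy hz, fun h => hp (by rwa [← Set.mem_singleton_iff.1 h])⟩,
      left_mem_segment _ _ _, right_mem_segment _ _ _, (convex_segment _ _).isPreconnected⟩

lemma puncConn_convex {S : Set (ℝ × ℝ)} (hS : Convex ℝ S)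
    (h : ∀ p ∈ S, ∀ δ > 0, (p.1 + δ, p.2) ∈ S ∧ (p.1, p.2 + δ) ∈ S) : PuncConn ↥S := by
  rintro ⟨p, hp⟩ N hN
  rw [nhds_subtype_eq_comap, Filter.mem_comap] at hN
  obtain ⟨O, hO, hON⟩ := hN
  obtain ⟨r, hr, hrO⟩ := Metric.mem_nhds_iff.1 hO
  refine ⟨Subtype.val ⁻¹' (Metric.ball p r), continuous_subtype_val.continuousAt.preimage_mem_nhds
    (Metric.ball_mem_nhds _ hr), (Set.preimage_mono hrO).trans hON, ?_⟩
  rw [← Topology.IsInducing.subtypeVal.isPreconnected_image]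
  have hr2 : |r / 2| < r := by rw [abs_of_pos (by positivity)]; linarith
  have := preconn_aux (p := p) (δ := r / 2) (hS.inter (convex_ball p r)) (by positivity)
    ⟨(h p hp _ (by positivity)).1, by simp [Prod.dist_eq, Real.dist_eq]; exact ⟨by simpa [abs_div] using hr2, hr⟩⟩
    ⟨(h p hp _ (by positivity)).2, by simp [Prod.dist_eq, Real.dist_eq]; exact ⟨hr, by simpa [abs_div] using hr2⟩⟩
  convert this using 1
  ext z
  constructor
  · rintro ⟨x, ⟨hx, hxy⟩, rfl⟩
    exact ⟨⟨x.2, hx⟩, fun h => hxy (Subtype.ext h)⟩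
  · rintro ⟨⟨hzS, hz⟩, hzy⟩
    exact ⟨⟨z, hzS⟩, ⟨hz, fun h => hzy (congrArg Subtype.val h)⟩, rfl⟩

lemma puncConn_halfPlane : PuncConn ↥HalfPlane := by
  apply puncConn_convex
  · exact convex_halfSpace_ge (f := fun p : ℝ × ℝ => p.2) (LinearMap.snd ℝ ℝ ℝ).isLinear 0
  · intro p hp δ hδ
    simp only [HalfPlane, Set.mem_setOf_eq] at *
    exact ⟨hp, by linarith⟩

lemma PuncConn.of_homeo {X Y : Type*} [TopologicalSpace X] [TopologicalSpace Y] (e : X ≃ₜ Y)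
    (h : PuncConn Y) : PuncConn X := by
  intro x N hN
  have h1 : e '' N ∈ nhds (e x) := e.isOpenMap.image_mem_nhds hN
  obtain ⟨W, hW, hWN, hc⟩ := h (e x) _ h1
  refine ⟨e ⁻¹' W, e.continuous.continuousAt.preimage_mem_nhds hW, ?_, ?_⟩
  · intro z hz
    obtain ⟨x', hx', he⟩ := hWN hz
    rwa [← e.injective he]
  · rw [← e.isInducing.isPreconnected_image]
    convert hc using 1
    ext z
    constructor
    · rintro ⟨x, ⟨hx, hxy⟩, rfl⟩
      exact ⟨hx, fun h => hxy (e.injective h)⟩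
    · rintro ⟨hz, hzy⟩
      obtain ⟨x', rfl⟩ := e.surjective z
      exact ⟨x', ⟨hz, fun h => hzy (congrArg e h)⟩, rfl⟩

lemma puncConn_plane : PuncConn (ℝ × ℝ) :=
  PuncConn.of_homeo (Homeomorph.Set.univ (ℝ × ℝ)).symm
    (puncConn_convex convex_univ (by simp))

lemma locallyPlanar_puncConn (K : SimplicialComplex ℝ (Pt n)) (v : Pt n)
    (h : IsLocallyPlanarPt K v) : ∃ U : Set (Pt n), U ⊆ K.space ∧ U ∈ nhdsWithin v K.space ∧
      PuncConn ↥U := by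
  rcases h.2 with ⟨U, hU, hn, V, hV, ⟨e⟩⟩ | ⟨U, hU, hn, V, hV, ⟨e⟩⟩
  · exact ⟨U, hU, hn, PuncConn.of_homeo e (puncConn_subtype puncConn_plane V hV)⟩
  · exact ⟨U, hU, hn, PuncConn.of_homeo e (puncConn_subtype puncConn_halfPlane V hV)⟩

lemma isClosed_hulls {F : Set (Finset (Pt n))} (hF : F.Finite) :
    IsClosed (⋃ s ∈ F, convexHull ℝ (s : Set (Pt n))) :=
  hF.isClosed_biUnion fun s _ => (s.finite_toSet.isCompact_convexHull (𝕜 := ℝ)).isClosed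

/-- A set meeting every neighborhood of `v` in `|K|` away from `v`. -/
lemma segment_meets (K : SimplicialComplex ℝ (Pt n)) (v a : Pt n) (ha : a ∈ linkVertices K v)
    {W : Set (Pt n)} (hW : W ∈ nhdsWithin v K.space) :
    ∃ s ∈ K.faces, v ∈ s ∧ a ∈ s ∧ (s : Set (Pt n)) = {v, a} ∧
      ∃ z ∈ W, z ≠ v ∧ z ∈ convexHull ℝ (s : Set (Pt n)) := by
  obtain ⟨hav, s, hs, he⟩ := ha
  have hvs : v ∈ s := by rw [← Finset.mem_coe, he]; simp
  have has : a ∈ s := by rw [← Finset.mem_coe, he]; simp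
  refine ⟨s, hs, hvs, has, he, ?_⟩
  let f : ℝ → Pt n := fun t => AffineMap.lineMap v a t
  have hf : Continuous f := AffineMap.lineMap_continuous
  have hf0 : f 0 = v := by simp [f]
  have hseg : ∀ t ∈ Set.Icc (0:ℝ) 1, f t ∈ convexHull ℝ (s : Set (Pt n)) := by
    intro t ht
    rw [he, convexHull_pair, segment_eq_image_lineMap]
    exact ⟨t, ht, rfl⟩
  have htend : Filter.Tendsto f (nhdsWithin 0 (Set.Ioo 0 1)) (nhdsWithin v K.space) := by
    apply tendsto_nhdsWithin_of_tendsto_nhds_of_eventually_within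
    · have := hf.tendsto 0
      rw [hf0] at this
      exact this.mono_left nhdsWithin_le_nhds
    · filter_upwards [self_mem_nhdsWithin] with t ht
      exact SimplicialComplex.convexHull_subset_space hs (hseg t ⟨ht.1.le, ht.2.le⟩)
  have hne : (nhdsWithin (0:ℝ) (Set.Ioo 0 1)).NeBot := by
    rw [nhdsWithin_Ioo_eq_nhdsGT one_pos]; infer_instance
  obtain ⟨t, htW, ht⟩ := hne.nonempty_of_mem (Filter.inter_mem (htend hW) self_mem_nhdsWithin)
  refine ⟨f t, htW, ?_, hseg t ⟨ht.1.le, ht.2.le⟩⟩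
  intro h
  have : f t = f 0 := by rw [h, hf0]
  exact ht.1.ne' (AffineMap.lineMap_injective ℝ hav.symm this)

/-- A face containing `v` and a link vertex `c`: all other vertices are reachable from `c`. -/
lemma face_reachable (K : SimplicialComplex ℝ (Pt n)) (hdim : TwoDimensional K) (v : Pt n)
    {s : Finset (Pt n)} (hs : s ∈ K.faces) (hvs : v ∈ s) (c : linkVertices K v)
    (hc : (c : Pt n) ∈ s) {d : Pt n} (hd : d ∈ s) (hdv : d ≠ v) :
    ∃ h : d ∈ linkVertices K v, (linkGraph K v).Reachable c ⟨d, h⟩ := by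
  classical
  have hdl : d ∈ linkVertices K v :=
    ⟨hdv, {v, d}, K.down_closed hs (by intro x; simp; rintro (rfl | rfl) <;> assumption) (by simp),
      by simp⟩
  refine ⟨hdl, ?_⟩
  by_cases hcd : (c : Pt n) = d
  · have : c = ⟨d, hdl⟩ := Subtype.ext hcd
    rw [this]
  · apply SimpleGraph.Adj.reachable
    have hcv : (c : Pt n) ≠ v := c.2.1
    refine ⟨hcd, {v, (c : Pt n), d}, K.down_closed hs ?_ (by simp), ?_, by simp⟩
    · intro x; simp; rintro (rfl | rfl | rfl) <;> assumption
    · exact Finset.card_eq_three.2 ⟨_, _, _, hcv.symm, hdv.symm, hcd, rfl⟩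

/-- if every edge through `v` lies in at most two triangles and the link graph of
`v` is disconnected, then `v` is not a locally planar point of `|K|`. -/
theorem not_locallyPlanar_of_disconnected_link (K : SimplicialComplex ℝ (Pt n))
    (hfin : K.faces.Finite) (hdim : TwoDimensional K)
    (v : Pt n) (hv : v ∈ K.vertices)
    (hle : ∀ e ∈ K.faces, e.card = 2 → v ∈ e → (trianglesContaining K e).ncard ≤ 2)
    (hdisc : ∃ a b : linkVertices K v, ¬ (linkGraph K v).Reachable a b) :
    ¬ IsLocallyPlanarPt K v := by
  classical
  intro hlp
  obtain ⟨a, b, hab⟩ := hdisc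
  obtain ⟨U, hUK, hU, hP⟩ := locallyPlanar_puncConn K v hlp
  have hvU : v ∈ U := mem_of_mem_nhdsWithin hlp.1 hU
  let C : Set (Pt n) := {c | ∃ h : c ∈ linkVertices K v, (linkGraph K v).Reachable a ⟨c, h⟩}
  let FA : Set (Finset (Pt n)) := {s | s ∈ K.faces ∧ v ∈ s ∧ ∃ c ∈ s, c ∈ C}
  let FB : Set (Finset (Pt n)) := {s | s ∈ K.faces ∧ v ∈ s ∧ ∀ c ∈ s, c ∉ C}
  let FC : Set (Finset (Pt n)) := {s | s ∈ K.faces ∧ v ∉ s}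
  have cA := isClosed_hulls (hfin.subset (fun s hs => hs.1 : FA ⊆ K.faces))
  have cB := isClosed_hulls (hfin.subset (fun s hs => hs.1 : FB ⊆ K.faces))
  have cC := isClosed_hulls (hfin.subset (fun s hs => hs.1 : FC ⊆ K.faces))
  have hvC : v ∉ ⋃ s ∈ FC, convexHull ℝ (s : Set (Pt n)) := by
    simp only [Set.mem_iUnion, not_exists]
    intro s hs h
    exact hs.2 ((SimplicialComplex.vertex_mem_convexHull_iff hv hs.1).1 h)
  have hO := cC.isOpen_compl.mem_nhds hvC
  obtain ⟨W, hW, hWN, hWc⟩ := hP ⟨v, hvU⟩ (Subtype.val ⁻¹' _)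
    (continuous_subtype_val.continuousAt.preimage_mem_nhds hO)
  -- transport to the ambient space
  have hW' : Subtype.val '' W ∈ nhdsWithin v K.space := by
    have h1 : Subtype.val '' W ∈ nhdsWithin v U := by
      rw [nhdsWithin_eq_map_subtype_coe hvU]
      exact Filter.image_mem_map hW
    have h2 : nhdsWithin v K.space ≤ nhdsWithin v U := by
      rw [nhdsWithin, nhdsWithin]
      exact le_inf inf_le_left (Filter.le_principal_iff.2 hU)
    exact h2 h1
  have hWc' : IsPreconnected (Subtype.val '' (W \ {⟨v, hvU⟩})) :=
    (Topology.IsInducing.subtypeVal.isPreconnected_image).2 hWc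
  have hmem : ∀ z ∈ Subtype.val '' W, z ≠ v → z ∈ Subtype.val '' (W \ {⟨v, hvU⟩}) := by
    rintro _ ⟨z, hz, rfl⟩ hzv
    exact ⟨z, ⟨hz, fun h => hzv (congrArg Subtype.val h)⟩, rfl⟩
  have key := (isPreconnected_closed_iff.1 hWc') _ _ cA cB ?_ ?_ ?_
  · obtain ⟨z, ⟨w, ⟨hw, hwv⟩, rfl⟩, hzA, hzB⟩ := key
    simp only [Set.mem_iUnion] at hzA hzB
    obtain ⟨s, ⟨hs, hvs, c, hcs, hcl, hcr⟩, hzs⟩ := hzA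
    obtain ⟨t, ⟨ht, hvt, htC⟩, hzt⟩ := hzB
    have hz := K.inter_subset_convexHull hs ht ⟨hzs, hzt⟩
    have hst : (s ∩ t : Set (Pt n)) ⊆ {v} := by
      rintro d ⟨hds, hdt⟩
      by_contra hdv
      obtain ⟨hdl, hr⟩ := face_reachable K hdim v hs hvs ⟨c, hcl⟩ hcs hds hdv
      exact htC d hdt ⟨hdl, hcr.trans hr⟩
    have hz' := convexHull_mono (𝕜 := ℝ) hst hz
    rw [convexHull_singleton] at hz'
    exact hwv (Subtype.ext hz')
  · rintro _ ⟨w, ⟨hw, hwv⟩, rfl⟩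
    obtain ⟨s, hs, hws⟩ := SimplicialComplex.mem_space_iff.1 (hUK w.2)
    have hvs : v ∈ s := by
      by_contra hvs
      exact hWN hw (Set.mem_biUnion (show s ∈ FC from ⟨hs, hvs⟩) hws)
    by_cases h : ∃ c ∈ s, c ∈ C
    · exact Or.inl (Set.mem_biUnion (show s ∈ FA from ⟨hs, hvs, h⟩) hws)
    · push Not at h
      exact Or.inr (Set.mem_biUnion (show s ∈ FB from ⟨hs, hvs, h⟩) hws)
  · obtain ⟨s, hs, hvs, has, -, z, hzW, hzv, hzs⟩ := segment_meets K v a a.2 hW'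
    exact ⟨z, hmem z hzW hzv, Set.mem_biUnion
      (show s ∈ FA from ⟨hs, hvs, a, has, a.2, SimpleGraph.Reachable.refl _⟩) hzs⟩
  · obtain ⟨s, hs, hvs, has, he, z, hzW, hzv, hzs⟩ := segment_meets K v b b.2 hW'
    refine ⟨z, hmem z hzW hzv, Set.mem_biUnion (show s ∈ FB from ⟨hs, hvs, ?_⟩) hzs⟩
    rintro c hc ⟨hcl, hcr⟩
    rw [← Finset.mem_coe, he] at hc
    rcases hc with rfl | hc
    · exact hcl.1 rfl
    · rw [Set.mem_singleton_iff] at hc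
      subst hc
      exact hab hcr

end PaperAlg
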